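/- arXiv:1704.07995 — 3 statements merged into one kernel-verified Lean document; each statement's English description precedes it below -/
import Mathlib

section
/- Let 0 < α < 1 and T > 0, and let u : [0,T] → ℝ be absolutely continuous (differentiable with derivative integrable on [0,T]). Then for every t ∈ (0,T], (1/2) · (1/Γ(1-α)) ∫₀ᵗ (t-s)^{-α} (d/ds)(u(s)²) ds ≤ u(t) · (1/Γ(1-α)) ∫₀ᵗ (t-s)^{-α} u'(s) ds; that is, (1/2) · ᶜD₀ᵅ(u²)(t) ≤ u(t) · ᶜD₀ᵅu(t). -/
/-! Write `(u²)' = 2 u u'` and `u = v + u(t)` with `v(t) = 0`: the claim reduces to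
`∫₀ᵗ k v v' ≤ 0` for the kernel `k(s) = (t - s)^(-α)`. Since `k` is nonnegative and increasing, it
is a superposition of indicators of intervals `(c, t]`, its superlevel sets, and on each of these
`∫_c^t v v' = (v(t)² - v(c)²) / 2 = -v(c)² / 2 ≤ 0`. -/

open Filter MeasureTheory Set
open scoped Topology

theorem integral_mul_eq_integral_setIntegral_lt {X : Type*} [MeasurableSpace X] {μ : Measure X}
    [SFinite μ] {k g : X → ℝ} (hk : AEStronglyMeasurable k μ) (hk0 : 0 ≤ᵐ[μ] k)
    (hg : AEStronglyMeasurable g μ) (hkg : Integrable (fun x ↦ k x * g x) μ) :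
    ∫ x, k x * g x ∂μ = ∫ y in Ioi (0 : ℝ), ∫ x in {x | y < k x}, g x ∂μ := by
  set ν : Measure ℝ := volume.restrict (Ioi 0)
  let F : X → ℝ → ℝ := fun x ↦ (Iio (k x)).indicator fun _ ↦ g x
  have fiber_volume : ∀ x, 0 ≤ k x → ν.real (Iio (k x)) = k x := fun x hx ↦ by
    simp [ν, measureReal_restrict_apply measurableSet_Iio, Iio_inter_Ioi, hx]
  have hF : Integrable (Function.uncurry F) (μ.prod ν) := by
    have hmeas : AEStronglyMeasurable (Function.uncurry F) (μ.prod ν) :=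
      hg.comp_fst.indicator₀
        (nullMeasurableSet_lt measurable_snd.aemeasurable hk.comp_fst.aemeasurable)
    refine (integrable_prod_iff hmeas).2 ⟨.of_forall fun x ↦ ?_, hkg.norm.congr ?_⟩
    · change Integrable (F x) ν
      refine (integrable_indicator_iff measurableSet_Iio).2 (integrableOn_const (C := g x) ?_)
      simp [ν, Measure.restrict_apply measurableSet_Iio, Iio_inter_Ioi]
    · filter_upwards [hk0] with x hx
      simp [F, norm_indicator_eq_indicator_norm, integral_indicator_const _ measurableSet_Iio,
        fiber_volume x hx, abs_of_nonneg hx]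
  calc ∫ x, k x * g x ∂μ = ∫ x, ∫ y, F x y ∂ν ∂μ := by
        refine integral_congr_ae ?_
        filter_upwards [hk0] with x hx
        simp [F, integral_indicator_const _ measurableSet_Iio, fiber_volume x hx]
    _ = ∫ y, ∫ x, F x y ∂μ ∂ν := integral_integral_swap hF
    _ = ∫ y, ∫ x in {x | y < k x}, g x ∂μ ∂ν := by
        congr with y
        exact integral_indicator₀ (nullMeasurableSet_lt aemeasurable_const hk.aemeasurable)

theorem exists_ae_eq_Ioc_of_upward_closed {a b : ℝ} (hab : a ≤ b) {S : Set ℝ} (hS : S ⊆ Ioo a b)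
    (hup : ∀ x ∈ S, ∀ y ∈ Ioo a b, x ≤ y → y ∈ S) :
    ∃ c ∈ Icc a b, S =ᵐ[volume] Ioc c b := by
  rcases S.eq_empty_or_nonempty with rfl | hne
  · exact ⟨b, right_mem_Icc.2 hab, by simp⟩
  have hbdd : BddBelow S := ⟨a, fun x hx ↦ (hS hx).1.le⟩
  have hac : a ≤ sInf S := le_csInf hne fun x hx ↦ (hS hx).1.le
  refine ⟨sInf S, ⟨hac, ?_⟩, ?_⟩
  · obtain ⟨x, hx⟩ := hne
    exact (csInf_le hbdd hx).trans (hS hx).2.le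
  have lower : Ioo (sInf S) b ⊆ S := fun y hy ↦ by
    obtain ⟨x, hx, hxy⟩ := exists_lt_of_csInf_lt hne hy.1
    exact hup x hx y ⟨hac.trans_lt hy.1, hy.2⟩ hxy.le
  have upper : S ⊆ Icc (sInf S) b := fun x hx ↦ ⟨csInf_le hbdd hx, (hS hx).2.le⟩
  exact (upper.eventuallyLE.trans Ioc_ae_eq_Icc.symm.le).antisymm
    (Ioo_ae_eq_Ioc.symm.le.trans lower.eventuallyLE)

variable {a b : ℝ} {k u g : ℝ → ℝ}

theorem intervalIntegral_mul_nonpos_of_monotoneOn (hab : a ≤ b) (hk : MonotoneOn k (Ioo a b))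
    (hk0 : ∀ s ∈ Ioo a b, 0 ≤ k s) (hg : IntervalIntegrable g volume a b)
    (hg0 : ∀ c ∈ Icc a b, ∫ s in c..b, g s ≤ 0) : ∫ s in a..b, k s * g s ≤ 0 := by
  by_cases hkg : IntervalIntegrable (fun s ↦ k s * g s) volume a b
  swap
  · exact (intervalIntegral.integral_undef hkg).le
  rw [intervalIntegrable_iff_integrableOn_Ioo_of_le hab] at hg hkg
  have hk_meas : AEStronglyMeasurable k (volume.restrict (Ioo a b)) :=
    (aemeasurable_restrict_of_monotoneOn measurableSet_Ioo hk).aestronglyMeasurable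
  rw [intervalIntegral.integral_of_le hab, integral_Ioc_eq_integral_Ioo,
    integral_mul_eq_integral_setIntegral_lt hk_meas
      (ae_restrict_of_forall_mem measurableSet_Ioo hk0) hg.aestronglyMeasurable hkg]
  refine integral_nonpos fun y ↦ ?_
  have hlevel : NullMeasurableSet {s | y < k s} (volume.restrict (Ioo a b)) :=
    nullMeasurableSet_lt aemeasurable_const hk_meas.aemeasurable
  obtain ⟨c, hc, hcS⟩ := exists_ae_eq_Ioc_of_upward_closed (S := {s | y < k s} ∩ Ioo a b) hab
    inter_subset_right fun s hs r hr hsr ↦ ⟨hs.1.trans_le (hk hs.2 hr hsr), hr⟩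
  calc ∫ s in {s | y < k s}, g s ∂volume.restrict (Ioo a b) = ∫ s in c..b, g s := by
        rw [Measure.restrict_restrict₀ hlevel, setIntegral_congr_set hcS,
          intervalIntegral.integral_of_le hc.2]
    _ ≤ 0 := hg0 c hc

theorem intervalIntegrable_mul_left_of_monotoneOn {c : ℝ} (hc : c ∈ Ioo a b)
    (hk : MonotoneOn k (Ioo a b)) (hk0 : ∀ s ∈ Ioo a b, 0 ≤ k s)
    (hg : IntervalIntegrable g volume a c) :
    IntervalIntegrable (fun s ↦ k s * g s) volume a c := by
  have hsub : Ioc a c ⊆ Ioo a b := Ioc_subset_Ioo_right hc.2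
  rw [intervalIntegrable_iff_integrableOn_Ioc_of_le hc.1.le] at hg ⊢
  refine hg.bdd_mul (c := k c)
    (aemeasurable_restrict_of_monotoneOn measurableSet_Ioc (hk.mono hsub)).aestronglyMeasurable
    (ae_restrict_of_forall_mem measurableSet_Ioc fun s hs ↦ ?_)
  rw [Real.norm_of_nonneg (hk0 s (hsub hs))]
  exact hk (hsub hs) hc hs.2

theorem intervalIntegrable_of_continuousOn_mul (hu : ContinuousOn u (uIcc a b))
    (hu_ne : ∀ s ∈ uIcc a b, u s ≠ 0) (hug : IntervalIntegrable (fun s ↦ u s * g s) volume a b) :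
    IntervalIntegrable g volume a b :=
  (hug.continuousOn_mul (hu.inv₀ hu_ne)).congr fun s hs ↦
    inv_mul_cancel_left₀ (hu_ne s (uIoc_subset_uIcc hs)) (g s)

theorem intervalIntegrable_mul_of_mul_continuousOn (hab : a ≤ b) (hk : MonotoneOn k (Ioo a b))
    (hk0 : ∀ s ∈ Ioo a b, 0 ≤ k s) (hg : IntervalIntegrable g volume a b)
    (hu : ContinuousOn u (Icc a b)) (hub : u b ≠ 0)
    (hkug : IntervalIntegrable (fun s ↦ k s * (u s * g s)) volume a b) :
    IntervalIntegrable (fun s ↦ k s * g s) volume a b := by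
  rcases hab.eq_or_lt with rfl | hab
  · exact .refl
  have hne : ∀ᶠ s in 𝓝[Icc a b] b, u s ≠ 0 :=
    (hu b (right_mem_Icc.2 hab.le)).eventually_ne hub
  rw [nhdsWithin_Icc_eq_nhdsLE hab] at hne
  obtain ⟨l, hl, hl_ne⟩ := (mem_nhdsLE_iff_exists_mem_Ico_Ioc_subset hab).1 hne
  obtain ⟨c, hlc, hcb⟩ := exists_between hl.2
  have hc : c ∈ Ioo a b := ⟨hl.1.trans_lt hlc, hcb⟩
  have hc_mem : c ∈ uIcc a b := Ioo_subset_Icc_self.trans Icc_subset_uIcc hc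
  have left : IntervalIntegrable (fun s ↦ k s * g s) volume a c :=
    intervalIntegrable_mul_left_of_monotoneOn hc hk hk0 (hg.mono_set (uIcc_subset_uIcc_left hc_mem))
  have right : IntervalIntegrable (fun s ↦ k s * g s) volume c b := by
    have hsub : uIcc c b ⊆ uIcc a b := uIcc_subset_uIcc_right hc_mem
    refine intervalIntegrable_of_continuousOn_mul (hu.mono (uIcc_of_le hab.le ▸ hsub))
      (fun s hs ↦ ?_) (by simpa only [mul_left_comm] using hkug.mono_set hsub)
    rw [uIcc_of_le hcb.le] at hs
    exact hl_ne ⟨hlc.trans_le hs.1, hs.2⟩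
  exact left.trans right

theorem absolutelyContinuousOnInterval_congr {X : Type*} [PseudoMetricSpace X] {f₁ f₂ : ℝ → X}
    (hf : AbsolutelyContinuousOnInterval f₁ a b) (heq : EqOn f₁ f₂ (uIcc a b)) :
    AbsolutelyContinuousOnInterval f₂ a b := by
  refine Tendsto.congr' ?_ hf
  filter_upwards [mem_inf_of_right (mem_principal_self _)] with E hE
  exact Finset.sum_congr rfl fun i hi ↦ by rw [heq (hE.1 i hi).1, heq (hE.1 i hi).2]

theorem absolutelyContinuousOnInterval_const {X : Type*} [PseudoMetricSpace X] (c : X) :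
    AbsolutelyContinuousOnInterval (fun _ ↦ c) a b :=
  (LipschitzWith.const c).lipschitzOnWith.absolutelyContinuousOnInterval

theorem absolutelyContinuousOnInterval_of_differentiableAt
    (hu : ∀ s ∈ uIcc a b, DifferentiableAt ℝ u s)
    (hint : IntervalIntegrable (deriv u) volume a b) : AbsolutelyContinuousOnInterval u a b := by
  refine absolutelyContinuousOnInterval_congr ((absolutelyContinuousOnInterval_const (u a)).fun_add
    (hint.absolutelyContinuousOnInterval_intervalIntegral left_mem_uIcc)) fun x hx ↦ ?_
  have hsub : uIcc a x ⊆ uIcc a b := uIcc_subset_uIcc_left hx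
  rw [intervalIntegral.integral_deriv_eq_sub (fun s hs ↦ hu s (hsub hs)) (hint.mono_set hsub),
    add_sub_cancel]

theorem intervalIntegral_mul_deriv_self (hu : AbsolutelyContinuousOnInterval u a b) :
    ∫ s in a..b, u s * deriv u s = (u b ^ 2 - u a ^ 2) / 2 := by
  have h := hu.integral_mul_deriv_eq_deriv_mul hu
  simp only [mul_comm (deriv u _)] at h
  linarith

theorem ae_deriv_sq (hu : AbsolutelyContinuousOnInterval u a b) :
    ∀ᵐ s, s ∈ uIcc a b → deriv (fun s ↦ u s ^ 2) s = 2 * (u s * deriv u s) := by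
  filter_upwards [hu.ae_differentiableAt] with s hs hmem
  simp [deriv_fun_pow (hs hmem), mul_assoc]

theorem intervalIntegral_mul_sub_mul_deriv_nonpos (hab : a ≤ b) (hk : MonotoneOn k (Ioo a b))
    (hk0 : ∀ s ∈ Ioo a b, 0 ≤ k s) (hu : AbsolutelyContinuousOnInterval u a b) :
    ∫ s in a..b, k s * ((u s - u b) * deriv u s) ≤ 0 := by
  have hv : AbsolutelyContinuousOnInterval (fun s ↦ u s - u b) a b :=
    hu.fun_sub (absolutelyContinuousOnInterval_const _)
  refine intervalIntegral_mul_nonpos_of_monotoneOn hab hk hk0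
    (hu.intervalIntegrable_deriv.continuousOn_mul hv.continuousOn) fun c hc ↦ ?_
  have hvc := hv.mono (uIcc_subset_uIcc_right (uIcc_of_le hab ▸ hc))
  calc ∫ s in c..b, (u s - u b) * deriv u s = -(u c - u b) ^ 2 / 2 := by
        simpa using intervalIntegral_mul_deriv_self hvc
    _ ≤ 0 := by linarith [sq_nonneg (u c - u b)]

theorem intervalIntegral_mul_mul_deriv_le (hab : a ≤ b) (hk : MonotoneOn k (Ioo a b))
    (hk0 : ∀ s ∈ Ioo a b, 0 ≤ k s) (hu : AbsolutelyContinuousOnInterval u a b) :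
    ∫ s in a..b, k s * (u s * deriv u s) ≤ u b * ∫ s in a..b, k s * deriv u s := by
  have hnonpos := intervalIntegral_mul_sub_mul_deriv_nonpos hab hk hk0 hu
  by_cases hku' : IntervalIntegrable (fun s ↦ k s * deriv u s) volume a b
  · have hkuu' : IntervalIntegrable (fun s ↦ k s * (u s * deriv u s)) volume a b := by
      simpa only [mul_left_comm] using hku'.continuousOn_mul hu.continuousOn
    simp only [sub_mul, mul_sub, mul_left_comm (k _) (u b)] at hnonpos
    rwa [intervalIntegral.integral_sub hkuu' (hku'.const_mul _),
      intervalIntegral.integral_const_mul, sub_nonpos] at hnonpos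
  -- The right-hand integral is `0` by convention, and so is the left-hand one unless `u b = 0`.
  · rw [intervalIntegral.integral_undef hku', mul_zero]
    by_cases hub : u b = 0
    · simpa only [hub, sub_zero] using hnonpos
    · refine (intervalIntegral.integral_undef fun hkuu' ↦ hku' ?_).le
      exact intervalIntegrable_mul_of_mul_continuousOn hab hk hk0 hu.intervalIntegrable_deriv
        (uIcc_of_le hab ▸ hu.continuousOn) hub hkuu'

theorem monotoneOn_sub_rpow_neg {α : ℝ} (hα : 0 ≤ α) (t : ℝ) :
    MonotoneOn (fun s ↦ (t - s) ^ (-α)) (Iio t) := fun _ _ _ hr hsr ↦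
  Real.rpow_le_rpow_of_nonpos (sub_pos.2 hr) (sub_le_sub_left hsr t) (neg_nonpos.2 hα)

/-- The Caputo fractional derivative of order `α ∈ [0, 1)` with base point `0`. It is `0` by
convention when `s ↦ (t - s) ^ (-α) * u' s` is not integrable on `[0, t]`. -/
noncomputable def caputoDeriv (α : ℝ) (u : ℝ → ℝ) (t : ℝ) : ℝ :=
  (1 / Real.Gamma (1 - α)) * ∫ s in (0 : ℝ)..t, (t - s) ^ (-α) * deriv u s

theorem caputoDeriv_sq {α t : ℝ} (hu : AbsolutelyContinuousOnInterval u 0 t) :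
    caputoDeriv α (fun s ↦ u s ^ 2) t =
      2 * ((1 / Real.Gamma (1 - α)) * ∫ s in (0 : ℝ)..t, (t - s) ^ (-α) * (u s * deriv u s)) := by
  have hint : ∫ s in (0 : ℝ)..t, (t - s) ^ (-α) * deriv (fun s ↦ u s ^ 2) s =
      2 * ∫ s in (0 : ℝ)..t, (t - s) ^ (-α) * (u s * deriv u s) := by
    rw [← intervalIntegral.integral_const_mul]
    refine intervalIntegral.integral_congr_ae ?_
    filter_upwards [ae_deriv_sq hu] with s hs hmem
    rw [hs (uIoc_subset_uIcc hmem), mul_left_comm]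
  rw [caputoDeriv, hint, mul_left_comm]

theorem caputo_square_inequality_general {α t : ℝ} (hα0 : 0 ≤ α) (hα1 : α < 1) (ht : 0 ≤ t)
    (hu : AbsolutelyContinuousOnInterval u 0 t) :
    (1 / 2) * caputoDeriv α (fun s ↦ u s ^ 2) t ≤ u t * caputoDeriv α u t := by
  have hΓ : 0 ≤ 1 / Real.Gamma (1 - α) :=
    one_div_nonneg.2 (Real.Gamma_pos_of_pos (sub_pos.2 hα1)).le
  have hkernel : ∫ s in (0 : ℝ)..t, (t - s) ^ (-α) * (u s * deriv u s) ≤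
      u t * ∫ s in (0 : ℝ)..t, (t - s) ^ (-α) * deriv u s :=
    intervalIntegral_mul_mul_deriv_le ht
      ((monotoneOn_sub_rpow_neg hα0 t).mono Ioo_subset_Iio_self)
      (fun s hs ↦ Real.rpow_nonneg (sub_nonneg.2 hs.2.le) _) hu
  calc (1 / 2) * caputoDeriv α (fun s ↦ u s ^ 2) t
      = (1 / Real.Gamma (1 - α)) * ∫ s in (0 : ℝ)..t, (t - s) ^ (-α) * (u s * deriv u s) := by
        rw [caputoDeriv_sq hu]; ring
    _ ≤ (1 / Real.Gamma (1 - α)) * (u t * ∫ s in (0 : ℝ)..t, (t - s) ^ (-α) * deriv u s) :=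
        mul_le_mul_of_nonneg_left hkernel hΓ
    _ = u t * caputoDeriv α u t := mul_left_comm _ _ _

/-- For `0 < α < 1` and an absolutely continuous `u` on `[0,T]`
(differentiable with integrable derivative), the Caputo fractional derivative of
order `α` satisfies `(1/2) ᶜD₀ᵅ(u²)(t) ≤ u(t) · ᶜD₀ᵅu(t)` for all `t ∈ (0,T]`. -/
theorem caputo_square_inequality
    (α T : ℝ) (hα0 : 0 < α) (hα1 : α < 1) (hT : 0 < T)
    (u : ℝ → ℝ)
    (hdiff : ∀ s ∈ Set.Icc (0 : ℝ) T, DifferentiableAt ℝ u s)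
    (hint : IntervalIntegrable (deriv u) MeasureTheory.volume 0 T) :
    ∀ t ∈ Set.Ioc (0 : ℝ) T,
      (1 / 2) * ((1 / Real.Gamma (1 - α)) *
          ∫ s in (0 : ℝ)..t, (t - s) ^ (-α) * deriv (fun s => (u s) ^ 2) s) ≤
        u t * ((1 / Real.Gamma (1 - α)) *
          ∫ s in (0 : ℝ)..t, (t - s) ^ (-α) * deriv u s) := by
  intro t ht
  have hsub : Icc 0 t ⊆ Icc 0 T := Icc_subset_Icc_right ht.2
  rw [← uIcc_of_le hT.le, ← uIcc_of_le ht.1.le] at hsub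
  rw [← uIcc_of_le hT.le] at hdiff
  exact caputo_square_inequality_general hα0.le hα1 ht.1.le
    (absolutelyContinuousOnInterval_of_differentiableAt (fun s hs ↦ hdiff s (hsub hs))
      (hint.mono_set hsub))
end

section
/- (Fractional Gronwall inequality.) Let 0 ≤ α < 1, T > 0, let u : [0,T] → ℝ be continuous and non-negative, let φ : [0,T] → ℝ be non-negative, monotonically increasing and continuous, and let M > 0. If u(t) ≤ φ(t) + M ∫₀ᵗ u(s) (t-s)^{-α} ds for all 0 ≤ t ≤ T, then u(t) ≤ φ(t) · E_{1-α}( M Γ(1-α) t^{1-α} ) for all 0 ≤ t < T, where E_{1-α} is the Mittag-Leffler function. -/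
/-- The Mittag-Leffler function `E_β(z) = Σ_{k=0}^∞ z^k / Γ(βk + 1)`. -/
noncomputable def mittagLeffler (β z : ℝ) : ℝ :=
  ∑' k : ℕ, z ^ k / Real.Gamma (β * k + 1)

/-!
Write `β = 1 - α` and `c = M Γ(β)`, so that the hypothesis at times `s ≤ t` reads
`u ≤ φ(t) + c I^β u` with `I^β` the Riemann–Liouville integral. The Euler beta integral gives
`c I^β F_k = F_{k+1}` for the Mittag-Leffler terms `F_k(s) = (c s^β)^k / Γ(βk + 1)`. Feeding the
crude bound `u ≤ C` into the inequality `n` times therefore gives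
`u ≤ φ(t) (F_0 + ⋯ + F_{n-1}) + C F_n`, and the last term vanishes as `n → ∞` because the
Mittag-Leffler series converges.
-/

open MeasureTheory Set Filter
open scoped Topology

theorem exp_neg_mul_rpow_le_Gamma_add_one {s R : ℝ} (hs : 0 ≤ s) (hR : 0 ≤ R) :
    Real.exp (-R) * R ^ s ≤ Real.Gamma (s + 1) := by
  have hsub : Ioi R ⊆ Ioi 0 := Ioi_subset_Ioi hR
  have hΓ : IntegrableOn (fun x => Real.exp (-x) * x ^ s) (Ioi 0) := by
    simpa only [add_sub_cancel_right] using
      Real.GammaIntegral_convergent (by positivity : 0 < s + 1)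
  calc
    Real.exp (-R) * R ^ s = ∫ x in Ioi R, Real.exp (-x) * R ^ s := by
      rw [integral_mul_const, integral_exp_neg_Ioi]
    _ ≤ ∫ x in Ioi R, Real.exp (-x) * x ^ s := by
      refine setIntegral_mono_on ((integrableOn_exp_neg_Ioi R).mul_const _) (hΓ.mono_set hsub)
        measurableSet_Ioi fun x hx => ?_
      have hRx : R ≤ x := (mem_Ioi.mp hx).le
      gcongr
    _ ≤ ∫ x in Ioi 0, Real.exp (-x) * x ^ s := by
      refine setIntegral_mono_set hΓ ?_ hsub.eventuallyLE
      filter_upwards [ae_restrict_mem measurableSet_Ioi] with x hx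
      exact mul_nonneg (Real.exp_pos _).le (Real.rpow_nonneg (mem_Ioi.mp hx).le _)
    _ = Real.Gamma (s + 1) := by
      simp only [Real.Gamma_eq_integral (by positivity : 0 < s + 1), add_sub_cancel_right]

theorem integral_rpow_mul_sub_rpow {p q t : ℝ} (hp : 0 < p) (hq : 0 < q) (ht : 0 < t) :
    ∫ s in 0..t, s ^ (p - 1) * (t - s) ^ (q - 1) =
      t ^ (p + q - 1) * ProbabilityTheory.beta p q := by
  have hbeta : Complex.betaIntegral p q = (ProbabilityTheory.beta p q : ℂ) := by
    rw [Complex.betaIntegral_eq_Gamma_mul_div _ _ (by simpa) (by simpa), ProbabilityTheory.beta,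
      ← Complex.ofReal_add]
    simp only [Complex.Gamma_ofReal, Complex.ofReal_mul, Complex.ofReal_div]
  apply Complex.ofReal_injective
  rw [← intervalIntegral.integral_ofReal, Complex.ofReal_mul, Complex.ofReal_cpow ht.le, ← hbeta]
  push_cast
  rw [← Complex.betaIntegral_scaled _ _ ht]
  refine intervalIntegral.integral_congr fun s hs => ?_
  rw [uIcc_of_le ht.le] at hs
  simp only [Complex.ofReal_cpow hs.1, Complex.ofReal_cpow (sub_nonneg.mpr hs.2),
    Complex.ofReal_sub, Complex.ofReal_one]

section MittagLefflerTerm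

/-- The `k`-th term `z^k / Γ(βk + 1)` of the Mittag-Leffler series at `z`. -/
noncomputable def mittagLefflerTerm (β z : ℝ) (k : ℕ) : ℝ :=
  z ^ k / Real.Gamma (β * k + 1)

theorem mittagLefflerTerm_zero (β z : ℝ) : mittagLefflerTerm β z 0 = 1 := by
  simp [mittagLefflerTerm]

theorem norm_mittagLefflerTerm_le {β : ℝ} (hβ : 0 < β) (z : ℝ) (k : ℕ) :
    ‖mittagLefflerTerm β z k‖ ≤ Real.exp ((2 * |z|) ^ β⁻¹) * (1 / 2) ^ k := by
  set R : ℝ := (2 * |z|) ^ β⁻¹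
  have hR : 0 ≤ R := by positivity
  have hΓ : 0 < Real.Gamma (β * k + 1) := Real.Gamma_pos_of_pos (by positivity)
  have hRpow : R ^ (β * k) = (2 * |z|) ^ k := by
    rw [Real.rpow_mul_natCast hR, Real.rpow_inv_rpow (by positivity) hβ.ne']
  have hbound : Real.exp (-R) * (2 * |z|) ^ k ≤ Real.Gamma (β * k + 1) :=
    hRpow ▸ exp_neg_mul_rpow_le_Gamma_add_one (by positivity) hR
  rw [mittagLefflerTerm, norm_div, norm_pow, Real.norm_eq_abs, Real.norm_of_nonneg hΓ.le,
    div_le_iff₀ hΓ]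
  calc
    |z| ^ k = Real.exp R * (1 / 2) ^ k * (Real.exp (-R) * (2 * |z|) ^ k) := by
      rw [mul_mul_mul_comm, ← Real.exp_add, add_neg_cancel, Real.exp_zero, one_mul, ← mul_pow]
      ring
    _ ≤ Real.exp R * (1 / 2) ^ k * Real.Gamma (β * k + 1) := by gcongr

theorem hasSum_mittagLefflerTerm {β : ℝ} (hβ : 0 < β) (z : ℝ) :
    HasSum (mittagLefflerTerm β z) (mittagLeffler β z) :=
  (Summable.of_norm_bounded (summable_geometric_two.mul_left _)
    (norm_mittagLefflerTerm_le hβ z)).hasSum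

theorem continuous_mittagLefflerTerm_const_mul_rpow {β : ℝ} (hβ : 0 ≤ β) (c : ℝ) (k : ℕ) :
    Continuous fun s : ℝ => mittagLefflerTerm β (c * s ^ β) k :=
  ((continuous_const.mul (Real.continuous_rpow_const hβ)).pow k).div_const _

end MittagLefflerTerm

section RiemannLiouville

/-- The Riemann–Liouville integral `(I^β f)(t) = Γ(β)⁻¹ ∫₀ᵗ f(s) (t - s)^(β - 1) ds`
of order `β`, based at `0`. -/
noncomputable def riemannLiouvilleIntegral (β : ℝ) (f : ℝ → ℝ) (t : ℝ) : ℝ :=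
  (Real.Gamma β)⁻¹ * ∫ s in 0..t, f s * (t - s) ^ (β - 1)

variable {β t : ℝ} {f g : ℝ → ℝ}

theorem intervalIntegrable_mul_sub_rpow_of_continuousOn {p : ℝ} (hp : -1 < p)
    (hf : ContinuousOn f (uIcc 0 t)) :
    IntervalIntegrable (fun s => f s * (t - s) ^ p) volume 0 t := by
  have hkernel : IntervalIntegrable (fun s : ℝ => (t - s) ^ p) volume 0 t := by
    simpa using (intervalIntegral.intervalIntegrable_rpow' (a := t) (b := 0) hp).comp_sub_left t
  exact hkernel.continuousOn_mul hf

theorem riemannLiouvilleIntegral_mono (hβ : 0 < β) (ht : 0 ≤ t)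
    (hf : IntervalIntegrable (fun s => f s * (t - s) ^ (β - 1)) volume 0 t)
    (hg : IntervalIntegrable (fun s => g s * (t - s) ^ (β - 1)) volume 0 t)
    (hfg : ∀ s ∈ Icc 0 t, f s ≤ g s) :
    riemannLiouvilleIntegral β f t ≤ riemannLiouvilleIntegral β g t := by
  refine mul_le_mul_of_nonneg_left ?_ (inv_nonneg.mpr (Real.Gamma_pos_of_pos hβ).le)
  exact intervalIntegral.integral_mono_on ht hf hg fun s hs =>
    mul_le_mul_of_nonneg_right (hfg s hs) (Real.rpow_nonneg (sub_nonneg.mpr hs.2) _)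

theorem riemannLiouvilleIntegral_add
    (hf : IntervalIntegrable (fun s => f s * (t - s) ^ (β - 1)) volume 0 t)
    (hg : IntervalIntegrable (fun s => g s * (t - s) ^ (β - 1)) volume 0 t) :
    riemannLiouvilleIntegral β (fun s => f s + g s) t =
      riemannLiouvilleIntegral β f t + riemannLiouvilleIntegral β g t := by
  simp only [riemannLiouvilleIntegral, add_mul, intervalIntegral.integral_add hf hg, mul_add]

theorem riemannLiouvilleIntegral_const_mul (β a : ℝ) (f : ℝ → ℝ) (t : ℝ) :
    riemannLiouvilleIntegral β (fun s => a * f s) t = a * riemannLiouvilleIntegral β f t := by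
  simp only [riemannLiouvilleIntegral, mul_left_comm a, ← intervalIntegral.integral_const_mul a,
    mul_assoc]

theorem riemannLiouvilleIntegral_finsetSum {ι : Type*} {A : Finset ι} {f : ι → ℝ → ℝ}
    (hf : ∀ i ∈ A, IntervalIntegrable (fun s => f i s * (t - s) ^ (β - 1)) volume 0 t) :
    riemannLiouvilleIntegral β (fun s => ∑ i ∈ A, f i s) t =
      ∑ i ∈ A, riemannLiouvilleIntegral β (f i) t := by
  simp only [riemannLiouvilleIntegral, Finset.sum_mul, intervalIntegral.integral_finsetSum hf,
    Finset.mul_sum]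

theorem riemannLiouvilleIntegral_rpow {p : ℝ} (hβ : 0 < β) (hp : -1 < p) (ht : 0 < t) :
    riemannLiouvilleIntegral β (fun s => s ^ p) t =
      Real.Gamma (p + 1) / Real.Gamma (p + β + 1) * t ^ (p + β) := by
  have hbeta := integral_rpow_mul_sub_rpow (by linarith : 0 < p + 1) hβ ht
  rw [add_sub_cancel_right, add_right_comm, add_sub_cancel_right, ProbabilityTheory.beta,
    add_right_comm] at hbeta
  have hΓ : Real.Gamma β ≠ 0 := (Real.Gamma_pos_of_pos hβ).ne'
  rw [riemannLiouvilleIntegral, hbeta]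
  field_simp

theorem const_mul_riemannLiouvilleIntegral_mittagLefflerTerm (hβ : 0 < β) (ht : 0 ≤ t)
    (c : ℝ) (k : ℕ) :
    c * riemannLiouvilleIntegral β (fun s => mittagLefflerTerm β (c * s ^ β) k) t =
      mittagLefflerTerm β (c * t ^ β) (k + 1) := by
  rcases ht.eq_or_lt with rfl | ht_pos
  · simp [riemannLiouvilleIntegral, mittagLefflerTerm, Real.zero_rpow hβ.ne']
  have hterm : ∀ s ∈ uIcc 0 t,
      mittagLefflerTerm β (c * s ^ β) k = c ^ k / Real.Gamma (β * k + 1) * s ^ (β * k) := by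
    intro s hs
    rw [uIcc_of_le ht] at hs
    rw [mittagLefflerTerm, mul_pow, ← Real.rpow_mul_natCast hs.1, mul_div_right_comm]
  have hcongr : riemannLiouvilleIntegral β (fun s => mittagLefflerTerm β (c * s ^ β) k) t =
      riemannLiouvilleIntegral β (fun s => c ^ k / Real.Gamma (β * k + 1) * s ^ (β * k)) t :=
    congrArg _ (intervalIntegral.integral_congr fun s hs => by simp only [hterm s hs])
  have hβk : 0 ≤ β * k := by positivity
  have hΓ : Real.Gamma (β * k + 1) ≠ 0 := (Real.Gamma_pos_of_pos (by positivity)).ne'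
  rw [hcongr, riemannLiouvilleIntegral_const_mul,
    riemannLiouvilleIntegral_rpow hβ (by linarith) ht_pos, mittagLefflerTerm, mul_pow,
    ← Real.rpow_mul_natCast ht, Nat.cast_succ, mul_add_one, pow_succ]
  field_simp

end RiemannLiouville

section Gronwall

/-- The function `a (F_0 + ⋯ + F_{n-1}) + C F_n`, with `F_k(s) = (c s^β)^k / Γ(βk + 1)`: the `n`-th
Picard iterate of `f ↦ a + c I^β f` started at the constant `C`. -/
noncomputable def gronwallIterate (β a c C : ℝ) (n : ℕ) (s : ℝ) : ℝ :=
  a * ∑ k ∈ Finset.range n, mittagLefflerTerm β (c * s ^ β) k +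
    C * mittagLefflerTerm β (c * s ^ β) n

theorem gronwallIterate_zero (β a c C s : ℝ) : gronwallIterate β a c C 0 s = C := by
  simp [gronwallIterate, mittagLefflerTerm_zero]

theorem continuous_gronwallIterate {β : ℝ} (hβ : 0 ≤ β) (a c C : ℝ) (n : ℕ) :
    Continuous (gronwallIterate β a c C n) :=
  have hterm := continuous_mittagLefflerTerm_const_mul_rpow hβ c
  ((continuous_finsetSum _ fun k _ => hterm k).const_mul a).add ((hterm n).const_mul C)

theorem gronwallIterate_succ {β s : ℝ} (hβ : 0 < β) (hs : 0 ≤ s) (a c C : ℝ) (n : ℕ) :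
    gronwallIterate β a c C (n + 1) s =
      a + c * riemannLiouvilleIntegral β (gronwallIterate β a c C n) s := by
  have hcont := continuous_mittagLefflerTerm_const_mul_rpow hβ.le c
  have hsum_cont := continuous_finsetSum (Finset.range n) fun k _ => hcont k
  have hintegrable {f : ℝ → ℝ} (hf : Continuous f) :
      IntervalIntegrable (fun r => f r * (s - r) ^ (β - 1)) volume 0 s :=
    intervalIntegrable_mul_sub_rpow_of_continuousOn (by linarith) hf.continuousOn
  have hintegral : riemannLiouvilleIntegral β (gronwallIterate β a c C n) s =
      a * ∑ k ∈ Finset.range n,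
        riemannLiouvilleIntegral β (fun r => mittagLefflerTerm β (c * r ^ β) k) s +
      C * riemannLiouvilleIntegral β (fun r => mittagLefflerTerm β (c * r ^ β) n) s := by
    rw [← riemannLiouvilleIntegral_finsetSum fun k _ => hintegrable (hcont k),
      ← riemannLiouvilleIntegral_const_mul, ← riemannLiouvilleIntegral_const_mul]
    exact riemannLiouvilleIntegral_add (hintegrable (hsum_cont.const_mul a))
      (hintegrable ((hcont n).const_mul C))
  rw [hintegral, mul_add, mul_left_comm c a, mul_left_comm c C, Finset.mul_sum]
  simp only [const_mul_riemannLiouvilleIntegral_mittagLefflerTerm hβ hs]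
  rw [gronwallIterate, Finset.sum_range_succ', mittagLefflerTerm_zero]
  ring

theorem tendsto_gronwallIterate {β : ℝ} (hβ : 0 < β) (a c C s : ℝ) :
    Tendsto (fun n => gronwallIterate β a c C n s) atTop
      (𝓝 (a * mittagLeffler β (c * s ^ β))) := by
  have hsum := hasSum_mittagLefflerTerm hβ (c * s ^ β)
  simpa only [gronwallIterate, mul_zero, add_zero] using
    (hsum.tendsto_sum_nat.const_mul a).add (hsum.summable.tendsto_atTop_zero.const_mul C)

variable {β a c t : ℝ} {u : ℝ → ℝ}

theorem le_gronwallIterate (hβ : 0 < β) (hc : 0 ≤ c) {C : ℝ} (hC : ∀ s ∈ Icc 0 t, u s ≤ C)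
    (hu_int : ∀ s ∈ Icc 0 t,
      IntervalIntegrable (fun r => u r * (s - r) ^ (β - 1)) volume 0 s)
    (hu : ∀ s ∈ Icc 0 t, u s ≤ a + c * riemannLiouvilleIntegral β u s) (n : ℕ) :
    ∀ s ∈ Icc 0 t, u s ≤ gronwallIterate β a c C n s := by
  induction n with
  | zero => simpa only [gronwallIterate_zero] using hC
  | succ n ih =>
    intro s hs
    have hG_int := intervalIntegrable_mul_sub_rpow_of_continuousOn (t := s)
      (by linarith : -1 < β - 1) (continuous_gronwallIterate hβ.le a c C n).continuousOn
    have hmono : riemannLiouvilleIntegral β u s ≤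
        riemannLiouvilleIntegral β (gronwallIterate β a c C n) s :=
      riemannLiouvilleIntegral_mono hβ hs.1 (hu_int s hs) hG_int fun r hr =>
        ih r ⟨hr.1, hr.2.trans hs.2⟩
    calc
      u s ≤ a + c * riemannLiouvilleIntegral β u s := hu s hs
      _ ≤ a + c * riemannLiouvilleIntegral β (gronwallIterate β a c C n) s := by gcongr
      _ = gronwallIterate β a c C (n + 1) s := (gronwallIterate_succ hβ hs.1 a c C n).symm

theorem le_mul_mittagLeffler_of_le_add_riemannLiouvilleIntegral (hβ : 0 < β) (hc : 0 ≤ c)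
    (ht : 0 ≤ t) (hu_bdd : BddAbove (u '' Icc 0 t))
    (hu_int : ∀ s ∈ Icc 0 t,
      IntervalIntegrable (fun r => u r * (s - r) ^ (β - 1)) volume 0 s)
    (hu : ∀ s ∈ Icc 0 t, u s ≤ a + c * riemannLiouvilleIntegral β u s) :
    u t ≤ a * mittagLeffler β (c * t ^ β) := by
  obtain ⟨C, hC⟩ := hu_bdd
  exact ge_of_tendsto' (tendsto_gronwallIterate hβ a c C t) fun n =>
    le_gronwallIterate hβ hc (fun s hs => hC (mem_image_of_mem u hs)) hu_int hu n t
      (right_mem_Icc.mpr ht)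

end Gronwall

theorem fractional_gronwall_general {α T M : ℝ} (hα : α < 1) (hM : 0 ≤ M) {u φ : ℝ → ℝ}
    (hu_bdd : BddAbove (u '' Icc 0 T))
    (hu_int : ∀ t ∈ Icc 0 T, IntervalIntegrable (fun s => u s * (t - s) ^ (-α)) volume 0 t)
    (hφ_mono : MonotoneOn φ (Icc 0 T))
    (h : ∀ t ∈ Icc 0 T, u t ≤ φ t + M * ∫ s in 0..t, u s * (t - s) ^ (-α)) :
    ∀ t ∈ Icc 0 T,
      u t ≤ φ t * mittagLeffler (1 - α) (M * Real.Gamma (1 - α) * t ^ (1 - α)) := by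
  intro t ht
  have hβ : 0 < 1 - α := sub_pos.mpr hα
  have hΓ : 0 < Real.Gamma (1 - α) := Real.Gamma_pos_of_pos hβ
  have hexponent : 1 - α - 1 = -α := by ring
  have hsub : Icc 0 t ⊆ Icc 0 T := Icc_subset_Icc_right ht.2
  refine le_mul_mittagLeffler_of_le_add_riemannLiouvilleIntegral hβ (by positivity) ht.1
    (hu_bdd.mono (image_mono hsub)) (fun s hs => hexponent ▸ hu_int s (hsub hs)) fun s hs => ?_
  calc
    u s ≤ φ s + M * ∫ r in 0..s, u r * (s - r) ^ (-α) := h s (hsub hs)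
    _ ≤ φ t + M * ∫ r in 0..s, u r * (s - r) ^ (-α) := by
      gcongr
      exact hφ_mono (hsub hs) ht hs.2
    _ = φ t + M * Real.Gamma (1 - α) * riemannLiouvilleIntegral (1 - α) u s := by
      rw [riemannLiouvilleIntegral, hexponent, mul_assoc, mul_inv_cancel_left₀ hΓ.ne']

/-- Fractional Gronwall inequality: if `u` is continuous and
non-negative on `[0,T]`, `φ` is non-negative, monotonically increasing and
continuous on `[0,T]`, `M > 0`, and
`u(t) ≤ φ(t) + M ∫₀ᵗ u(s)(t-s)^{-α} ds` on `[0,T]`, then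
`u(t) ≤ φ(t) · E_{1-α}(M Γ(1-α) t^{1-α})` on `[0,T)`. -/
theorem fractional_gronwall
    (α T M : ℝ) (hα0 : 0 ≤ α) (hα1 : α < 1) (hT : 0 < T) (hM : 0 < M)
    (u φ : ℝ → ℝ)
    (hu_cont : ContinuousOn u (Set.Icc 0 T))
    (hu_nonneg : ∀ t ∈ Set.Icc (0 : ℝ) T, 0 ≤ u t)
    (hφ_nonneg : ∀ t ∈ Set.Icc (0 : ℝ) T, 0 ≤ φ t)
    (hφ_mono : MonotoneOn φ (Set.Icc 0 T))
    (hφ_cont : ContinuousOn φ (Set.Icc 0 T))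
    (h : ∀ t ∈ Set.Icc (0 : ℝ) T,
      u t ≤ φ t + M * ∫ s in (0 : ℝ)..t, u s * (t - s) ^ (-α)) :
    ∀ t ∈ Set.Ico (0 : ℝ) T,
      u t ≤ φ t * mittagLeffler (1 - α) (M * Real.Gamma (1 - α) * t ^ (1 - α)) :=
  fun t ht => fractional_gronwall_general hα1 hM.le (isCompact_Icc.bddAbove_image hu_cont)
    (fun _ hs => intervalIntegrable_mul_sub_rpow_of_continuousOn (neg_lt_neg hα1)
      (hu_cont.mono (uIcc_subset_Icc (left_mem_Icc.mpr hT.le) hs)))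
    hφ_mono h t (Ico_subset_Icc_self ht)
end

section
/- Let 0 < α < 1 and define the Grünwald weights w_k = (-1)^k · C(α, k) for k ∈ ℕ, where C(α, k) is the generalized binomial coefficient. Then for every n ≥ 1: Σ_{k=0}^{n-1} w_k = - Σ_{k=n}^{∞} w_k, and 1/(n^{α} Γ(1-α)) < Σ_{k=0}^{n-1} w_k ≤ 1/n^{α}, where Γ is the Gamma function. -/
/-- The Grünwald weights `w_k = (-1)^k C(α, k)`, where
`C(α, k) = α(α-1)⋯(α-k+1)/k!` is the generalized binomial coefficient. -/
noncomputable def grunwaldWeight (α : ℝ) (k : ℕ) : ℝ :=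
  (-1 : ℝ) ^ k * ((∏ i ∈ Finset.range k, (α - i)) / (k.factorial : ℝ))

/-!
Since `w_k(α) = w_k(α - 1) - w_{k-1}(α - 1)`, the partial sum `∑ k < n + 1, w_k(α)` telescopes to
the single weight `w_n(α - 1) = ∏ 1 ≤ i ≤ n, (1 - α / i) = Γ(n + 1 - α) / (Γ(1 - α) n!)`.
Bernoulli's inequality, applied to each factor of the product, bounds it above by `(n + 1)^(-α)`;
Wendel's inequality `Γ(x + a) ≤ Γ(x) x^a`, a form of the log-convexity of `Γ`, bounds the quotient
below. The upper bound makes the partial sums tend to `0`, and as all weights but the first are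
nonpositive, the series is summable with sum `0`.
-/

open Finset Filter Topology

@[simp]
lemma grunwaldWeight_zero (α : ℝ) : grunwaldWeight α 0 = 1 := by
  simp [grunwaldWeight]

lemma grunwaldWeight_succ (α : ℝ) (n : ℕ) :
    grunwaldWeight α (n + 1) = (n - α) / (n + 1) * grunwaldWeight α n := by
  simp only [grunwaldWeight, prod_range_succ, Nat.factorial_succ, pow_succ]
  push_cast
  field_simp
  ring

lemma grunwaldWeight_succ_eq_mul_sub_one (α : ℝ) (n : ℕ) :
    grunwaldWeight α (n + 1) = -α / (n + 1) * grunwaldWeight (α - 1) n := by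
  induction n with
  | zero => simp [grunwaldWeight_succ]
  | succ n ih =>
    rw [grunwaldWeight_succ, ih, grunwaldWeight_succ (α - 1)]
    push_cast
    field_simp
    ring

lemma sum_range_succ_grunwaldWeight (α : ℝ) (n : ℕ) :
    ∑ k ∈ range (n + 1), grunwaldWeight α k = grunwaldWeight (α - 1) n := by
  induction n with
  | zero => simp
  | succ n ih =>
    rw [sum_range_succ, ih, grunwaldWeight_succ_eq_mul_sub_one, grunwaldWeight_succ (α - 1)]
    field_simp
    ring

lemma grunwaldWeight_nonneg {α : ℝ} (hα : α ≤ 0) (n : ℕ) : 0 ≤ grunwaldWeight α n := by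
  induction n with
  | zero => simp
  | succ n ih =>
    have hn : (0 : ℝ) ≤ n - α := by linarith [n.cast_nonneg (α := ℝ)]
    rw [grunwaldWeight_succ]
    positivity

lemma grunwaldWeight_succ_nonpos {α : ℝ} (hα0 : 0 ≤ α) (hα1 : α ≤ 1) (n : ℕ) :
    grunwaldWeight α (n + 1) ≤ 0 := by
  rw [grunwaldWeight_succ_eq_mul_sub_one]
  exact mul_nonpos_of_nonpos_of_nonneg
    (div_nonpos_of_nonpos_of_nonneg (neg_nonpos.2 hα0) (by positivity))
    (grunwaldWeight_nonneg (sub_nonpos.2 hα1) n)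

lemma one_sub_mul_le_one_add_rpow_neg {x α : ℝ} (hx : 0 ≤ x) (hα0 : 0 ≤ α) (hα1 : α ≤ 1) :
    1 - α * x ≤ (1 + x) ^ (-α) := by
  have bernoulli : (1 + x) ^ α ≤ 1 + α * x :=
    rpow_one_add_le_one_add_mul_self (by linarith) hα0 hα1
  calc
    1 - α * x ≤ (1 + α * x)⁻¹ := by
      rw [← one_div, le_div_iff₀ (by positivity)]
      linarith [sq_nonneg (α * x)]
    _ ≤ ((1 + x) ^ α)⁻¹ := by gcongr
    _ = (1 + x) ^ (-α) := (Real.rpow_neg (by positivity) α).symm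

lemma grunwaldWeight_sub_one_le_rpow_neg {α : ℝ} (hα0 : 0 ≤ α) (hα1 : α ≤ 1) (n : ℕ) :
    grunwaldWeight (α - 1) n ≤ ((n : ℝ) + 1) ^ (-α) := by
  induction n with
  | zero => simp
  | succ n ih =>
    calc
      grunwaldWeight (α - 1) (n + 1)
        = (1 - α * ((n : ℝ) + 1)⁻¹) * grunwaldWeight (α - 1) n := by
          rw [grunwaldWeight_succ]
          field_simp
          ring
      _ ≤ (1 + ((n : ℝ) + 1)⁻¹) ^ (-α) * ((n : ℝ) + 1) ^ (-α) := by
          gcongr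
          · exact grunwaldWeight_nonneg (sub_nonpos.2 hα1) n
          · exact one_sub_mul_le_one_add_rpow_neg (by positivity) hα0 hα1
      _ = (((n + 1 : ℕ) : ℝ) + 1) ^ (-α) := by
          rw [← Real.mul_rpow (by positivity) (by positivity)]
          congr 1
          push_cast
          field_simp

lemma tendsto_sum_range_grunwaldWeight {α : ℝ} (hα0 : 0 < α) (hα1 : α ≤ 1) :
    Tendsto (fun n ↦ ∑ k ∈ range n, grunwaldWeight α k) atTop (𝓝 0) := by
  rw [← tendsto_add_atTop_iff_nat 1]
  simp only [sum_range_succ_grunwaldWeight]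
  have rpow_tendsto : Tendsto (fun n : ℕ ↦ ((n : ℝ) + 1) ^ (-α)) atTop (𝓝 0) :=
    (tendsto_rpow_neg_atTop hα0).comp
      (tendsto_atTop_add_const_right _ _ tendsto_natCast_atTop_atTop)
  exact squeeze_zero (grunwaldWeight_nonneg (sub_nonpos.2 hα1))
    (grunwaldWeight_sub_one_le_rpow_neg hα0.le hα1) rpow_tendsto

lemma hasSum_grunwaldWeight {α : ℝ} (hα0 : 0 < α) (hα1 : α ≤ 1) :
    HasSum (grunwaldWeight α) 0 := by
  have tail : HasSum (fun n ↦ -grunwaldWeight α (n + 1)) 1 := by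
    rw [hasSum_iff_tendsto_nat_of_nonneg
      fun n ↦ neg_nonneg.2 (grunwaldWeight_succ_nonpos hα0.le hα1 n)]
    have partial_sums := ((tendsto_add_atTop_iff_nat 1).2
      (tendsto_sum_range_grunwaldWeight hα0 hα1)).const_sub 1
    simpa [sum_range_succ'] using partial_sums
  rw [← hasSum_nat_add_iff' 1]
  simpa using tail.neg

lemma grunwaldWeight_eq_Gamma_div {α : ℝ} (hα : ∀ m : ℕ, α ≠ m) (n : ℕ) :
    grunwaldWeight α n = Real.Gamma (n - α) / (Real.Gamma (-α) * n.factorial) := by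
  have hΓ : Real.Gamma (-α) ≠ 0 := Real.Gamma_ne_zero fun m ↦ neg_injective.ne (hα m)
  induction n with
  | zero => simp [hΓ]
  | succ n ih =>
    have functional_eq : Real.Gamma ((n + 1 : ℕ) - α) = (n - α) * Real.Gamma (n - α) := by
      rw [← Real.Gamma_add_one (sub_ne_zero.2 (hα n).symm)]
      push_cast
      ring_nf
    rw [grunwaldWeight_succ, ih, functional_eq, Nat.factorial_succ]
    push_cast
    field_simp

lemma Gamma_add_le_Gamma_mul_rpow {x a : ℝ} (hx : 0 < x) (ha0 : 0 ≤ a) (ha1 : a ≤ 1) :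
    Real.Gamma (x + a) ≤ Real.Gamma x * x ^ a := by
  have hΓ : 0 < Real.Gamma x := Real.Gamma_pos_of_pos hx
  have log_convex : Real.log (Real.Gamma ((1 - a) * x + a * (x + 1))) ≤
      (1 - a) * Real.log (Real.Gamma x) + a * Real.log (Real.Gamma (x + 1)) :=
    Real.convexOn_log_Gamma.2 hx (add_pos hx one_pos) (sub_nonneg.2 ha1) ha0 (sub_add_cancel 1 a)
  rw [← Real.log_le_log_iff (Real.Gamma_pos_of_pos (by positivity)) (by positivity)]
  calc
    Real.log (Real.Gamma (x + a)) = Real.log (Real.Gamma ((1 - a) * x + a * (x + 1))) := by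
      ring_nf
    _ ≤ (1 - a) * Real.log (Real.Gamma x) + a * Real.log (Real.Gamma (x + 1)) := log_convex
    _ = Real.log (Real.Gamma x * x ^ a) := by
      rw [Real.Gamma_add_one hx.ne', Real.log_mul hx.ne' hΓ.ne',
        Real.log_mul hΓ.ne' (by positivity), Real.log_rpow hx]
      ring

lemma factorial_lt_Gamma_mul_rpow {α : ℝ} (hα0 : 0 < α) (hα1 : α < 1) (n : ℕ) :
    (n.factorial : ℝ) < Real.Gamma (n + 1 - α) * ((n : ℝ) + 1) ^ α := by
  have hx : 0 < (n : ℝ) + 1 - α := by linarith [n.cast_nonneg (α := ℝ)]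
  have : 0 < Real.Gamma (n + 1 - α) := Real.Gamma_pos_of_pos hx
  calc
    (n.factorial : ℝ) = Real.Gamma (n + 1 - α + α) := by
      rw [sub_add_cancel, Real.Gamma_nat_eq_factorial]
    _ ≤ Real.Gamma (n + 1 - α) * (n + 1 - α) ^ α := Gamma_add_le_Gamma_mul_rpow hx hα0.le hα1.le
    _ < Real.Gamma (n + 1 - α) * ((n : ℝ) + 1) ^ α := by
      gcongr
      linarith

lemma one_div_rpow_mul_Gamma_lt_grunwaldWeight_sub_one {α : ℝ} (hα0 : 0 < α) (hα1 : α < 1)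
    (n : ℕ) :
    1 / (((n : ℝ) + 1) ^ α * Real.Gamma (1 - α)) < grunwaldWeight (α - 1) n := by
  have : 0 < Real.Gamma (1 - α) := Real.Gamma_pos_of_pos (sub_pos.2 hα1)
  have not_natCast (m : ℕ) : α - 1 ≠ m := by linarith [m.cast_nonneg (α := ℝ)]
  rw [grunwaldWeight_eq_Gamma_div not_natCast, neg_sub, sub_sub_eq_add_sub,
    div_lt_div_iff₀ (by positivity) (by positivity), one_mul]
  calc
    Real.Gamma (1 - α) * n.factorial
      < Real.Gamma (1 - α) * (Real.Gamma (n + 1 - α) * ((n : ℝ) + 1) ^ α) := by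
      gcongr
      exact factorial_lt_Gamma_mul_rpow hα0 hα1 n
    _ = Real.Gamma (n + 1 - α) * (((n : ℝ) + 1) ^ α * Real.Gamma (1 - α)) := by ring

/-- For `0 < α < 1` and `n ≥ 1`:
`Σ_{k=0}^{n-1} w_k = - Σ_{k=n}^∞ w_k` and
`1/(n^α Γ(1-α)) < Σ_{k=0}^{n-1} w_k ≤ 1/n^α`. -/
theorem grunwald_weights_partial_sum_bounds (α : ℝ) (hα0 : 0 < α) (hα1 : α < 1) :
    ∀ n : ℕ, 1 ≤ n →
      (∑ k ∈ Finset.range n, grunwaldWeight α k) =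
        -∑' k : ℕ, grunwaldWeight α (n + k) ∧
      1 / ((n : ℝ) ^ α * Real.Gamma (1 - α)) <
        ∑ k ∈ Finset.range n, grunwaldWeight α k ∧
      (∑ k ∈ Finset.range n, grunwaldWeight α k) ≤ 1 / (n : ℝ) ^ α := by
  intro n hn
  refine ⟨?tail, ?lower, ?upper⟩
  case tail =>
    have hw := hasSum_grunwaldWeight hα0 hα1.le
    have sum_add_tail := hw.summable.sum_add_tsum_nat_add n
    rw [hw.tsum_eq] at sum_add_tail
    simpa only [add_comm n] using eq_neg_of_add_eq_zero_left sum_add_tail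
  all_goals
    obtain ⟨m, rfl⟩ := Nat.exists_eq_add_of_le' hn
    rw [sum_range_succ_grunwaldWeight, Nat.cast_add_one]
  case lower => exact one_div_rpow_mul_Gamma_lt_grunwaldWeight_sub_one hα0 hα1 m
  case upper =>
    rw [one_div, ← Real.rpow_neg (by positivity)]
    exact grunwaldWeight_sub_one_le_rpow_neg hα0.le hα1.le m
end
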